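/- arXiv:2401.09649 — 2 statements merged into one kernel-verified Lean document; each statement's English description precedes it below -/
import Mathlib

section
/- Let X be an infinite subset of ℕ, and let B(X) = {Y ⊆ ℕ : Y cofinally bisects X}, viewed as a subset of the Cantor space 2^ℕ. Then the complement 2^ℕ \ B(X) belongs to the σ-ideal ℰ; that is, 2^ℕ \ B(X) is contained in a countable union of closed measure-zero subsets of 2^ℕ. -/
open MeasureTheory Filter Set

/-- `cnt X n` is the number of elements of `X` below `n`, i.e. `|X ∩ {0,…,n−1}|`. -/
noncomputable def cnt (X : Set ℕ) (n : ℕ) : ℕ := Nat.card ↥(X ∩ Set.Iio n)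

/-- `S` cofinally bisects `X`: for infinitely many `n`,
`|S ∩ X ∩ {0,…,n−1}| / |X ∩ {0,…,n−1}| = 1/2`. -/
def CofBisects (S X : Set ℕ) : Prop :=
  {n : ℕ | (cnt (S ∩ X) n : ℝ) / (cnt X n : ℝ) = 1 / 2}.Infinite

/-- Identify an element of Cantor space `2^ℕ` with a subset of `ℕ`. -/
def toSet (Y : ℕ → Bool) : Set ℕ := {i | Y i = true}

/-- `μ` is the uniform (1/2,1/2) product probability measure on Cantor space:
every basic cylinder determined by finitely many coordinates `s` has measure `(1/2)^|s|`. -/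
def IsCantorMeasure (μ : Measure (ℕ → Bool)) : Prop :=
  ∀ s : Finset ℕ, ∀ g : ℕ → Bool,
    μ {Y : ℕ → Bool | ∀ i ∈ s, Y i = g i} = (1 / 2 : ENNReal) ^ s.card

/-- Membership in the σ-ideal `ℰ` generated by closed measure-zero subsets of `2^ℕ`:
`A` is covered by countably many closed `μ`-null sets. -/
def MemE (μ : Measure (ℕ → Bool)) (A : Set (ℕ → Bool)) : Prop :=
  ∃ F : ℕ → Set (ℕ → Bool), (∀ n, IsClosed (F n) ∧ μ (F n) = 0) ∧ A ⊆ ⋃ n, F n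

/-!
Attach to `Y` the walk that at each `i ∈ X` moves by `+1` if `i ∈ Y` and by `-1` otherwise, and
stays put at `i ∉ X`. Its position at time `n` is `2 |Y ∩ X ∩ n| - |X ∩ n|`, so `Y` cofinally
bisects `X` exactly when the walk returns to `0` infinitely often. Under the product measure the
walk is a martingale with bounded increments; it cannot converge, because it moves by `±1`
infinitely often, so almost surely it is unbounded in both directions and, moving by at most `1`
at a time, hits `0` infinitely often. The exceptional set is the union over `N` of the sets of `Y`
whose walk avoids `0` from time `N` on, and these are closed because each position depends on
finitely many coordinates.
-/

open ProbabilityTheory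
open scoped Topology

section Sequences

variable {w : ℕ → ℤ}

lemma exists_mem_Icc_eq_of_le_succ_add_one (hw : ∀ n, w n ≤ w (n + 1) + 1) {m n : ℕ} {c : ℤ}
    (hmn : m ≤ n) (hm : c ≤ w m) (hn : w n ≤ c) : ∃ k ∈ Icc m n, w k = c := by
  induction n, hmn using Nat.le_induction with
  | base => exact ⟨m, ⟨le_rfl, le_rfl⟩, le_antisymm hn hm⟩
  | succ n hmn ih =>
    rcases le_or_gt (w n) c with hle | hgt
    · obtain ⟨k, hk, hwk⟩ := ih hle
      exact ⟨k, Icc_subset_Icc_right n.le_succ hk, hwk⟩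
    · exact ⟨n + 1, ⟨by omega, le_rfl⟩, by linarith [hw n, Int.add_one_le_iff.mpr hgt]⟩

lemma frequently_le_of_not_bddAbove {α : Type*} [LinearOrder α] {u : ℕ → α}
    (hu : ¬BddAbove (range u)) (c : α) : ∃ᶠ n in atTop, c ≤ u n := by
  have : Nonempty α := ⟨c⟩
  contrapose! hu
  exact IsBoundedUnder.bddAbove_range ⟨c, hu.mono fun _ ↦ le_of_lt⟩

lemma frequently_eq_of_not_bddAbove_of_not_bddBelow (hw : ∀ n, w n ≤ w (n + 1) + 1)
    (habove : ¬BddAbove (range w)) (hbelow : ¬BddBelow (range w)) (c : ℤ) :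
    ∃ᶠ n in atTop, w n = c := by
  refine frequently_atTop.mpr fun N ↦ ?_
  obtain ⟨m, hNm, hm⟩ := frequently_atTop.mp (frequently_le_of_not_bddAbove habove c) N
  obtain ⟨n, hmn, hn⟩ :=
    frequently_atTop.mp (frequently_le_of_not_bddAbove (α := ℤᵒᵈ) hbelow c) m
  obtain ⟨k, hk, hwk⟩ := exists_mem_Icc_eq_of_le_succ_add_one hw hmn hm hn
  exact ⟨k, hNm.trans hk.1, hwk⟩

lemma not_tendsto_intCast_of_frequently_ne_succ (hw : ∃ᶠ n in atTop, w (n + 1) ≠ w n) (x : ℝ) :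
    ¬Tendsto (fun n ↦ (w n : ℝ)) atTop (𝓝 x) := by
  intro hx
  have increments_tendsto : Tendsto (fun n ↦ (w (n + 1) : ℝ) - w n) atTop (𝓝 0) := by
    simpa using (hx.comp (tendsto_add_atTop_nat 1)).sub hx
  have eventually_small : ∀ᶠ n in atTop, |(w (n + 1) : ℝ) - w n| < 1 := by
    simpa using increments_tendsto.eventually (Metric.ball_mem_nhds 0 one_pos)
  obtain ⟨n, hne, hlt⟩ := (hw.and_eventually eventually_small).exists
  have hlt : |w (n + 1) - w n| < 1 := by exact_mod_cast hlt
  exact hne (sub_eq_zero.mp (Int.abs_lt_one_iff.mp hlt))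

end Sequences

section Martingales

variable {Ω : Type*} {mΩ : MeasurableSpace Ω} {P : Measure Ω}

-- The sum at time `n` includes `ξ n`: this is the indexing adapted to the natural filtration.
lemma martingale_sum_range_succ_of_iIndepFun {E : Type*} [NormedAddCommGroup E]
    [NormedSpace ℝ E] [CompleteSpace E] [MeasurableSpace E] [BorelSpace E]
    [SecondCountableTopology E] {ξ : ℕ → Ω → E} (hmeas : ∀ i, StronglyMeasurable (ξ i))
    (hindep : iIndepFun ξ P) (hintegrable : ∀ i, Integrable (ξ i) P) (hmean : ∀ i, P[ξ i] = 0) :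
    Martingale (fun n ↦ ∑ i ∈ Finset.range (n + 1), ξ i) (Filtration.natural ξ hmeas) P := by
  have : IsProbabilityMeasure P := hindep.isProbabilityMeasure
  have adapted : StronglyAdapted (Filtration.natural ξ hmeas)
      fun n ↦ ∑ i ∈ Finset.range (n + 1), ξ i := fun n ↦
    Finset.stronglyMeasurable_sum _ fun i hi ↦
      (Filtration.stronglyAdapted_natural hmeas i).mono
        ((Filtration.natural ξ hmeas).mono (Finset.mem_range_succ_iff.mp hi))
  refine martingale_of_condExp_sub_eq_zero_nat adapted
    (fun n ↦ integrable_finsetSum' _ fun i _ ↦ hintegrable i) fun n ↦ ?_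
  rw [Finset.sum_range_succ_sub_sum]
  filter_upwards [hindep.condExp_natural_ae_eq_of_lt hmeas n.lt_succ_self] with ω hω
  rw [hω, hmean, Pi.zero_apply]

lemma ae_frequently_eq_of_martingale [IsFiniteMeasure P] {ℱ : Filtration ℕ mΩ} {S : ℕ → Ω → ℤ}
    (hmart : Martingale (fun n ω ↦ (S n ω : ℝ)) ℱ P)
    (hstep : ∀ᵐ ω ∂P, ∀ n, |S (n + 1) ω - S n ω| ≤ 1)
    (hmove : ∀ᵐ ω ∂P, ∃ᶠ n in atTop, S (n + 1) ω ≠ S n ω) (c : ℤ) :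
    ∀ᵐ ω ∂P, ∃ᶠ n in atTop, S n ω = c := by
  have bounded_increments : ∀ᵐ ω ∂P, ∀ n, |(S (n + 1) ω : ℝ) - S n ω| ≤ (1 : NNReal) := by
    filter_upwards [hstep] with ω hω n
    rw [NNReal.coe_one]
    exact_mod_cast hω n
  filter_upwards [hstep, hmove,
    hmart.submartingale.bddAbove_iff_exists_tendsto bounded_increments,
    hmart.bddAbove_range_iff_bddBelow_range bounded_increments]
    with ω hstep hmove bddAbove_iff_converges bddAbove_iff_bddBelow
  have not_bddAbove : ¬BddAbove (range fun n ↦ (S n ω : ℝ)) := by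
    intro hbdd
    obtain ⟨x, hx⟩ := bddAbove_iff_converges.mp hbdd
    exact not_tendsto_intCast_of_frequently_ne_succ hmove x hx
  have range_cast : (range fun n ↦ (S n ω : ℝ)) = Int.cast '' range fun n ↦ S n ω :=
    range_comp _ _
  refine frequently_eq_of_not_bddAbove_of_not_bddBelow
    (fun n ↦ by linarith [(abs_le.mp (hstep n)).1]) (fun hbdd ↦ not_bddAbove ?_)
    (fun hbdd ↦ not_bddAbove (bddAbove_iff_bddBelow.mpr ?_)) c
  · exact range_cast ▸ Int.cast_mono.map_bddAbove hbdd
  · exact range_cast ▸ Int.cast_mono.map_bddBelow hbdd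

end Martingales

section CantorMeasure

variable {μ : Measure (ℕ → Bool)}

lemma IsCantorMeasure.eq_infinitePi (hμ : IsCantorMeasure μ) :
    μ = Measure.infinitePi fun _ ↦ (PMF.uniformOfFintype Bool).toMeasure := by
  refine (Measure.isProjectiveLimit_infinitePi _).unique (fun s ↦ ?_) |>.symm
  refine Measure.ext_of_singleton fun g ↦ ?_
  let extension : ℕ → Bool := fun i ↦ if hi : i ∈ s then g ⟨i, hi⟩ else false
  have preimage_eq_cylinder :
      s.restrict (π := fun _ ↦ Bool) ⁻¹' {g} = {Y : ℕ → Bool | ∀ i ∈ s, Y i = extension i} := by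
    ext Y
    simp +contextual [extension, funext_iff]
  rw [Measure.map_apply (by fun_prop) (measurableSet_singleton g), preimage_eq_cylinder, hμ,
    Measure.pi_singleton]
  simp

lemma IsCantorMeasure.isProbabilityMeasure (hμ : IsCantorMeasure μ) : IsProbabilityMeasure μ := by
  rw [hμ.eq_infinitePi]
  infer_instance

lemma IsCantorMeasure.iIndepFun_comp_eval (hμ : IsCantorMeasure μ) {β : ℕ → Type*}
    [∀ i, MeasurableSpace (β i)] (f : ∀ i, Bool → β i) : iIndepFun (fun i Y ↦ f i (Y i)) μ := by
  rw [hμ.eq_infinitePi]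
  exact iIndepFun_infinitePi fun i ↦ measurable_of_finite (f i)

lemma IsCantorMeasure.integral_comp_eval (hμ : IsCantorMeasure μ) {E : Type*}
    [NormedAddCommGroup E] [NormedSpace ℝ E] [CompleteSpace E] (f : Bool → E) (i : ℕ) :
    ∫ Y, f (Y i) ∂μ = (2⁻¹ : ℝ) • (f true + f false) := by
  have law_eval : μ.map (fun Y ↦ Y i) = (PMF.uniformOfFintype Bool).toMeasure := by
    rw [hμ.eq_infinitePi]
    exact Measure.infinitePi_map_eval _ i
  calc ∫ Y, f (Y i) ∂μ
      = ∫ b, f b ∂μ.map (fun Y ↦ Y i) :=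
        (integral_map (measurable_pi_apply i).aemeasurable
          StronglyMeasurable.of_discrete.aestronglyMeasurable).symm
    _ = (2⁻¹ : ℝ) • (f true + f false) := by simp [law_eval, PMF.integral_eq_sum]

lemma memE_compl_setOf_frequently_mem {U : ℕ → Set (ℕ → Bool)} (hopen : ∀ n, IsOpen (U n))
    (hfreq : ∀ᵐ Y ∂μ, ∃ᶠ n in atTop, Y ∈ U n) :
    MemE μ {Y | ∃ᶠ n in atTop, Y ∈ U n}ᶜ := by
  refine ⟨fun N ↦ ⋂ n ≥ N, (U n)ᶜ, fun N ↦ ⟨?_, ?_⟩, fun Y hY ↦ ?_⟩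
  · exact isClosed_biInter fun n _ ↦ (hopen n).isClosed_compl
  · refine measure_eq_zero_iff_ae_notMem.mpr (hfreq.mono fun Y hYfreq hY ↦ ?_)
    obtain ⟨n, hNn, hn⟩ := frequently_atTop.mp hYfreq N
    exact mem_iInter₂.mp hY n hNn hn
  · obtain ⟨N, hN⟩ := eventually_atTop.mp (not_frequently.mp hY)
    exact mem_iUnion.mpr ⟨N, mem_iInter₂.mpr hN⟩

end CantorMeasure

/-- The increment at time `i` of the walk measuring how evenly a set splits `X`: at `i ∈ X` it is
`1` or `-1` according to whether `b`, the membership of `i` in the set, holds; it is `0` off `X`. -/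
noncomputable def bisectionStep (X : Set ℕ) (i : ℕ) (b : Bool) : ℤ :=
  X.indicator (fun _ ↦ if b then 1 else -1) i

/-- The walk of the excess of elements of `X` inside `Y` over those outside; the position at time
`n` counts the elements below `n`. -/
noncomputable def bisectionWalk (X : Set ℕ) (Y : ℕ → Bool) (n : ℕ) : ℤ :=
  ∑ i ∈ Finset.range n, bisectionStep X i (Y i)

section BisectionWalk

variable {X : Set ℕ}

lemma cast_cnt_eq_sum_indicator (A : Set ℕ) (n : ℕ) :
    (cnt A n : ℤ) = ∑ i ∈ Finset.range n, A.indicator 1 i := by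
  classical
  have inter_eq_filter : A ∩ Iio n = ↑{i ∈ Finset.range n | i ∈ A} := by
    ext i
    simp [and_comm]
  rw [cnt, Nat.card_coe_set_eq, inter_eq_filter, ncard_coe_finset, Finset.card_filter]
  simp [indicator_apply]

lemma bisectionWalk_eq_two_mul_cnt_sub_cnt (X : Set ℕ) (Y : ℕ → Bool) (n : ℕ) :
    bisectionWalk X Y n = 2 * cnt (toSet Y ∩ X) n - cnt X n := by
  rw [bisectionWalk, cast_cnt_eq_sum_indicator, cast_cnt_eq_sum_indicator, Finset.mul_sum,
    ← Finset.sum_sub_distrib]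
  refine Finset.sum_congr rfl fun i _ ↦ ?_
  by_cases hX : i ∈ X <;> by_cases hY : Y i = true <;> simp [bisectionStep, toSet, hX, hY]

lemma eventually_cnt_pos (hX : X.Nonempty) : ∀ᶠ n in atTop, 0 < cnt X n := by
  obtain ⟨x, hx⟩ := hX
  filter_upwards [eventually_gt_atTop x] with n hxn
  rw [cnt, Nat.card_coe_set_eq, ncard_pos ((finite_Iio n).subset inter_subset_right)]
  exact ⟨x, hx, hxn⟩

lemma cofBisects_iff_frequently_bisectionWalk_eq_zero (hX : X.Nonempty) (Y : ℕ → Bool) :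
    CofBisects (toSet Y) X ↔ ∃ᶠ n in atTop, bisectionWalk X Y n = 0 := by
  rw [CofBisects, ← Nat.frequently_atTop_iff_infinite]
  refine frequently_congr ?_
  filter_upwards [eventually_cnt_pos hX] with n hn
  rw [bisectionWalk_eq_two_mul_cnt_sub_cnt, div_eq_div_iff (by positivity) two_ne_zero, sub_eq_zero]
  norm_cast
  rw [mul_comm, one_mul]

lemma bisectionWalk_succ_sub (X : Set ℕ) (Y : ℕ → Bool) (n : ℕ) :
    bisectionWalk X Y (n + 1) - bisectionWalk X Y n = bisectionStep X n (Y n) :=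
  Finset.sum_range_succ_sub_sum _

lemma abs_bisectionStep_le_one (X : Set ℕ) (i : ℕ) (b : Bool) : |bisectionStep X i b| ≤ 1 := by
  by_cases hi : i ∈ X <;> cases b <;> simp [bisectionStep, hi]

lemma bisectionStep_ne_zero {i : ℕ} (hi : i ∈ X) (b : Bool) : bisectionStep X i b ≠ 0 := by
  cases b <;> simp [bisectionStep, hi]

lemma frequently_bisectionWalk_succ_ne (hX : X.Infinite) (Y : ℕ → Bool) :
    ∃ᶠ n in atTop, bisectionWalk X Y (n + 1) ≠ bisectionWalk X Y n := by
  refine (Nat.frequently_atTop_iff_infinite.mpr hX).mono fun n hn ↦ sub_ne_zero.mp ?_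
  rw [bisectionWalk_succ_sub]
  exact bisectionStep_ne_zero hn (Y n)

lemma continuous_bisectionWalk (X : Set ℕ) (n : ℕ) : Continuous fun Y ↦ bisectionWalk X Y n :=
  continuous_finsetSum _ fun i _ ↦
    (continuous_of_discreteTopology (f := bisectionStep X i)).comp (continuous_apply i)

variable {μ : Measure (ℕ → Bool)}

lemma integral_bisectionStep (hμ : IsCantorMeasure μ) (X : Set ℕ) (i : ℕ) :
    ∫ Y, (bisectionStep X i (Y i) : ℝ) ∂μ = 0 := by
  rw [hμ.integral_comp_eval fun b ↦ (bisectionStep X i b : ℝ)]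
  by_cases hi : i ∈ X <;> simp [bisectionStep, hi]

lemma exists_martingale_bisectionWalk_succ (hμ : IsCantorMeasure μ) (X : Set ℕ) :
    ∃ ℱ : Filtration ℕ MeasurableSpace.pi,
      Martingale (fun n Y ↦ (bisectionWalk X Y (n + 1) : ℝ)) ℱ μ := by
  have := hμ.isProbabilityMeasure
  let ξ : ℕ → (ℕ → Bool) → ℝ := fun i Y ↦ bisectionStep X i (Y i)
  have hmeas (i : ℕ) : StronglyMeasurable (ξ i) :=
    (StronglyMeasurable.of_discrete (f := fun b ↦ (bisectionStep X i b : ℝ))).comp_measurable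
      (measurable_pi_apply i)
  have hintegrable (i : ℕ) : Integrable (ξ i) μ := by
    refine .of_bound (hmeas i).aestronglyMeasurable 1 (ae_of_all _ fun Y ↦ ?_)
    change |(bisectionStep X i (Y i) : ℝ)| ≤ 1
    exact_mod_cast abs_bisectionStep_le_one X i (Y i)
  have hindep : iIndepFun ξ μ := hμ.iIndepFun_comp_eval fun i b ↦ (bisectionStep X i b : ℝ)
  refine ⟨Filtration.natural ξ hmeas, ?_⟩
  convert martingale_sum_range_succ_of_iIndepFun hmeas hindep hintegrable
    (integral_bisectionStep hμ X) using 3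
  simp [bisectionWalk, ξ]

lemma ae_frequently_bisectionWalk_eq (hμ : IsCantorMeasure μ) (hX : X.Infinite) (c : ℤ) :
    ∀ᵐ Y ∂μ, ∃ᶠ n in atTop, bisectionWalk X Y n = c := by
  have := hμ.isProbabilityMeasure
  obtain ⟨ℱ, hmart⟩ := exists_martingale_bisectionWalk_succ hμ X
  have hstep : ∀ᵐ Y ∂μ, ∀ n, |bisectionWalk X Y (n + 1 + 1) - bisectionWalk X Y (n + 1)| ≤ 1 :=
    ae_of_all _ fun Y n ↦ by
      rw [bisectionWalk_succ_sub]
      exact abs_bisectionStep_le_one X (n + 1) (Y (n + 1))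
  have hmove : ∀ᵐ Y ∂μ,
      ∃ᶠ n in atTop, bisectionWalk X Y (n + 1 + 1) ≠ bisectionWalk X Y (n + 1) :=
    ae_of_all _ fun Y ↦ by
      have := frequently_bisectionWalk_succ_ne hX Y
      rwa [← map_add_atTop_eq_nat 1, frequently_map] at this
  filter_upwards [ae_frequently_eq_of_martingale hmart hstep hmove c] with Y hY
  exact (tendsto_add_atTop_nat 1).frequently hY

end BisectionWalk

/-- For infinite `X ⊆ ℕ`, the complement of
`B(X) = {Y ∈ 2^ℕ : Y cofinally bisects X}` belongs to `ℰ`. -/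
theorem complement_of_cofinally_bisecting_set_mem_E
    (μ : Measure (ℕ → Bool)) (hμ : IsCantorMeasure μ)
    (X : Set ℕ) (hX : X.Infinite) :
    MemE μ ({Y : ℕ → Bool | CofBisects (toSet Y) X}ᶜ) := by
  simp_rw [cofBisects_iff_frequently_bisectionWalk_eq_zero hX.nonempty]
  exact memE_compl_setOf_frequently_mem
    (fun n ↦ (isOpen_discrete {0}).preimage (continuous_bisectionWalk X n))
    (ae_frequently_bisectionWalk_eq hμ hX 0)
end

section
/- Let A, B be infinite subsets of ℕ and let a_1 < a_2 < a_3 < … be the increasing enumeration of A (indices starting at 1). For each n ∈ ℕ define A_n = {a_j : 2^{n+1} − 1 ≤ j ≤ 2^{n+2} − 2}, so that (A_n : n ∈ ℕ) is a block sequence with |A_n| = 2^{n+1}. If B splits the block sequence (A_n : n ∈ ℕ), i.e., both {n : A_n ⊆ B} and {n : A_n ∩ B = ∅} are infinite, then B cofinally bisects A. -/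
open Filter Set

/-!
Let `c m` be the number of indices `i < m` with `e i ∈ B`, where `e` enumerates `A` from index `0`.
Block `n` then consists of the indices in `[s, t)` with `s = 2 ^ (n + 1) - 2` and
`t = 2 ^ (n + 2) - 2`, so it makes up at least half of the indices below `t`. A block inside `B`
therefore forces `t ≤ 2 * c t`, and a block disjoint from `B` forces `2 * c t ≤ t`. As
`m ↦ 2 * c m` is monotone, it has a fixed point between any `m` of the first kind and any later `m`
of the second kind. A fixed point `m` says that `B` contains exactly half of the `m` elements of `A`
below `e m`.
-/

theorem exists_isFixedPt_of_monotone {f : ℕ → ℕ} (hf : Monotone f) {s t : ℕ} (hst : s ≤ t)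
    (hs : s ≤ f s) (ht : f t ≤ t) : ∃ m ∈ Icc s t, Function.IsFixedPt f m := by
  induction t, hst using Nat.le_induction with
  | base => exact ⟨s, left_mem_Icc.mpr le_rfl, ht.antisymm hs⟩
  | succ t hst ih =>
    obtain heq | hlt := ht.eq_or_lt
    · exact ⟨t + 1, right_mem_Icc.mpr (Nat.le_succ_of_le hst), heq⟩
    · obtain ⟨m, hm, hfix⟩ := ih ((hf t.le_succ).trans (Nat.lt_succ_iff.mp hlt))
      exact ⟨m, Icc_subset_Icc_right t.le_succ hm, hfix⟩

theorem frequently_isFixedPt_of_monotone {f : ℕ → ℕ} (hf : Monotone f)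
    (hle : ∃ᶠ m in atTop, m ≤ f m) (hge : ∃ᶠ m in atTop, f m ≤ m) :
    ∃ᶠ m in atTop, Function.IsFixedPt f m := by
  rw [frequently_atTop] at hle hge ⊢
  intro N
  obtain ⟨s, hNs, hs⟩ := hle N
  obtain ⟨t, hst, ht⟩ := hge s
  obtain ⟨m, ⟨hsm, -⟩, hm⟩ := exists_isFixedPt_of_monotone hf hst hs ht
  exact ⟨m, hNs.trans hsm, hm⟩

theorem cnt_eq_ncard (X : Set ℕ) (n : ℕ) : cnt X n = (X ∩ Iio n).ncard :=
  Nat.card_coe_set_eq _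

theorem cnt_monotone (X : Set ℕ) : Monotone (cnt X) := fun m n hmn => by
  simp only [cnt_eq_ncard]
  exact ncard_le_ncard (inter_subset_inter_right X (Iio_subset_Iio hmn))
    ((finite_Iio n).inter_of_right X)

theorem cnt_univ (n : ℕ) : cnt univ n = n := by
  rw [cnt_eq_ncard, univ_inter, ncard_Iio_nat]

theorem le_add_cnt_of_Ico_subset {X : Set ℕ} {s t : ℕ} (h : Ico s t ⊆ X) : t ≤ s + cnt X t := by
  have hcard : (Ico s t).ncard ≤ cnt X t := by
    rw [cnt_eq_ncard]
    exact ncard_le_ncard (subset_inter h Ico_subset_Iio_self) ((finite_Iio t).inter_of_right X)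
  rw [ncard_Ico_nat] at hcard
  omega

theorem cnt_le_of_disjoint_Ico {X : Set ℕ} {s t : ℕ} (h : Disjoint (Ico s t) X) :
    cnt X t ≤ s := by
  have hsub : X ∩ Iio t ⊆ Iio s := fun x ⟨hxX, hxt⟩ =>
    not_le.mp fun hsx => h.notMem_of_mem_left ⟨hsx, hxt⟩ hxX
  calc cnt X t = (X ∩ Iio t).ncard := cnt_eq_ncard X t
    _ ≤ (Iio s).ncard := ncard_le_ncard hsub (finite_Iio s)
    _ = s := ncard_Iio_nat s

theorem cnt_inter_range {e : ℕ → ℕ} (he : StrictMono e) (X : Set ℕ) (m : ℕ) :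
    cnt (X ∩ range e) (e m) = cnt (e ⁻¹' X) m := by
  have himage : X ∩ range e ∩ Iio (e m) = e '' (e ⁻¹' X ∩ Iio m) := by
    ext x
    constructor
    · rintro ⟨⟨hxX, i, rfl⟩, hi⟩
      exact ⟨i, ⟨hxX, he.lt_iff_lt.mp hi⟩, rfl⟩
    · rintro ⟨i, ⟨hiX, hi⟩, rfl⟩
      exact ⟨⟨hiX, i, rfl⟩, he hi⟩
  rw [cnt_eq_ncard, cnt_eq_ncard, himage, ncard_image_of_injective _ he.injective]

theorem cofBisects_univ_of_frequently_isFixedPt {X : Set ℕ}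
    (h : ∃ᶠ m in atTop, Function.IsFixedPt (fun m => 2 * cnt X m) m) : CofBisects X univ := by
  refine Nat.frequently_atTop_iff_infinite.mp
    ((h.and_eventually (eventually_gt_atTop 0)).mono fun m ⟨hfix, hpos⟩ => ?_)
  have hfix' : (2 * cnt X m : ℝ) = m := mod_cast hfix
  have hpos' : (0 : ℝ) < m := mod_cast hpos
  rw [inter_univ, cnt_univ, div_eq_div_iff hpos'.ne' two_ne_zero]
  linarith

theorem cofBisects_univ_of_splits_Ico {X : Set ℕ} {s t : ℕ → ℕ} (hst : ∀ n, 2 * s n ≤ t n)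
    (ht : Tendsto t atTop atTop) (hsub : ∃ᶠ n in atTop, Ico (s n) (t n) ⊆ X)
    (hdisj : ∃ᶠ n in atTop, Disjoint (Ico (s n) (t n)) X) : CofBisects X univ := by
  have hle : ∃ᶠ m in atTop, m ≤ 2 * cnt X m := ht.frequently <| hsub.mono fun n hn => by
    have := le_add_cnt_of_Ico_subset hn
    have := hst n
    omega
  have hge : ∃ᶠ m in atTop, 2 * cnt X m ≤ m := ht.frequently <| hdisj.mono fun n hn =>
    (Nat.mul_le_mul_left 2 (cnt_le_of_disjoint_Ico hn)).trans (hst n)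
  exact cofBisects_univ_of_frequently_isFixedPt
    (frequently_isFixedPt_of_monotone ((cnt_monotone X).const_mul' 2) hle hge)

theorem cofBisects_range_of_preimage {e : ℕ → ℕ} (he : StrictMono e) {X : Set ℕ}
    (h : CofBisects (e ⁻¹' X) univ) : CofBisects X (range e) := by
  refine (h.image he.injective.injOn).mono ?_
  rintro _ ⟨m, hm, rfl⟩
  have hrange : cnt (range e) (e m) = cnt univ m := by
    simpa only [univ_inter, preimage_univ] using cnt_inter_range he univ m
  rw [mem_ofPred_eq, inter_univ] at hm
  rwa [mem_ofPred_eq, cnt_inter_range he, hrange]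

theorem cofBisects_range_of_splits_image_Ico {e : ℕ → ℕ} (he : StrictMono e) {X : Set ℕ}
    {s t : ℕ → ℕ} (hst : ∀ n, 2 * s n ≤ t n) (ht : Tendsto t atTop atTop)
    (hsub : ∃ᶠ n in atTop, e '' Ico (s n) (t n) ⊆ X)
    (hdisj : ∃ᶠ n in atTop, Disjoint (e '' Ico (s n) (t n)) X) : CofBisects X (range e) := by
  simp only [image_subset_iff] at hsub
  simp only [disjoint_image_left] at hdisj
  exact cofBisects_range_of_preimage he (cofBisects_univ_of_splits_Ico hst ht hsub hdisj)

theorem tendsto_two_pow_add_two_sub_two_atTop :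
    Tendsto (fun n : ℕ => 2 ^ (n + 2) - 2) atTop atTop :=
  tendsto_atTop_mono (fun n => Nat.le_sub_of_add_le (n + 2).lt_two_pow_self.le) tendsto_id

theorem dyadic_block_eq_image_Ico {α : Type*} (a : ℕ → α) (n : ℕ) :
    {x | ∃ j, 2 ^ (n + 1) - 1 ≤ j ∧ j ≤ 2 ^ (n + 2) - 2 ∧ a j = x} =
      (fun i => a (i + 1)) '' Ico (2 ^ (n + 1) - 2) (2 ^ (n + 2) - 2) := by
  have hpow : 2 ≤ 2 ^ (n + 1) := Nat.le_self_pow n.succ_ne_zero 2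
  ext x
  constructor
  · rintro ⟨j, hlo, hhi, rfl⟩
    obtain ⟨i, rfl⟩ : ∃ i, j = i + 1 := ⟨j - 1, by omega⟩
    exact ⟨i, ⟨by omega, by omega⟩, rfl⟩
  · rintro ⟨i, ⟨hlo, hhi⟩, rfl⟩
    exact ⟨i + 1, by omega, by omega, rfl⟩

/-- Let `A, B` be infinite subsets of `ℕ`, `a` the increasing enumeration of `A`
with indices starting at 1, and for `n ∈ ℕ` let
`A_n = {a_j : 2^{n+1} − 1 ≤ j ≤ 2^{n+2} − 2}` (so `|A_n| = 2^{n+1}`).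
If `B` splits the block sequence `(A_n)`, i.e. both `{n : A_n ⊆ B}` and
`{n : A_n ∩ B = ∅}` are infinite, then `B` cofinally bisects `A`. -/
theorem cofBisects_of_splits_blocks
    (A B : Set ℕ) (hA : A.Infinite) (hB : B.Infinite)
    (a : ℕ → ℕ)
    (ha_mem : ∀ j, 1 ≤ j → a j ∈ A)
    (ha_mono : ∀ j k, 1 ≤ j → j < k → a j < a k)
    (ha_surj : ∀ x ∈ A, ∃ j, 1 ≤ j ∧ a j = x)
    (Ab : ℕ → Set ℕ)
    (hAb : ∀ n, Ab n = {x | ∃ j, 2 ^ (n + 1) - 1 ≤ j ∧ j ≤ 2 ^ (n + 2) - 2 ∧ a j = x})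
    (h1 : {n : ℕ | Ab n ⊆ B}.Infinite)
    (h2 : {n : ℕ | Ab n ∩ B = ∅}.Infinite) :
    CofBisects B A := by
  obtain rfl : range (fun i => a (i + 1)) = A := by
    refine (range_subset_iff.mpr fun i => ha_mem _ i.succ_pos).antisymm fun x hx => ?_
    obtain ⟨j, hj, rfl⟩ := ha_surj x hx
    exact ⟨j - 1, congrArg a (Nat.sub_add_cancel hj)⟩
  have he : StrictMono fun i => a (i + 1) :=
    fun i k hik => ha_mono _ _ i.succ_pos (Nat.succ_lt_succ hik)
  simp only [hAb, dyadic_block_eq_image_Ico, ← disjoint_iff_inter_eq_empty] at h1 h2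
  exact cofBisects_range_of_splits_image_Ico he (fun n => by rw [pow_succ 2 (n + 1)]; omega)
    tendsto_two_pow_add_two_sub_two_atTop (Nat.frequently_atTop_iff_infinite.mpr h1)
    (Nat.frequently_atTop_iff_infinite.mpr h2)
end
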